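/- There is no distance-regular graph with diameter 3 and intersection array {39,24,1;1,4,39}. -/

import Mathlib

/-!
The graph would be an antipodal 7-fold cover of the complete graph on 40 vertices, with smallest
eigenvalue `-3`, in which every vertex is on three cliques attaining the Delsarte bound
`1 + 39 / 3 = 14`. The proof establishes this geometric structure and refutes it by counting.

*Cliques.* For a clique `C`, consider the numbers of neighbours in `C` of the vertices that are
neither in `C` nor antipodal to a member of `C`. The intersection array determines the sum of the
squares of their deviations from 2 (`CoverParams.sum_sq`). It would be negative if `|C| = 15`, and it
vanishes if `|C| = 14`. So cliques have at most 14 vertices, and a vertex outside a 14-clique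
(a line) is adjacent to exactly 0 or 2 of its points; also, an edge is on at most one line.

*Local graphs.* The local graph at `x` has 39 vertices and valency 14, and nonadjacent vertices in it
have at most 3 common neighbours. Hence it has no 4-coclique, and if `a, b, c` is a 3-coclique, the
vertices equal or adjacent to `a` but not to `b` or `c` form a clique of size at least 9. The three
cliques obtained in this way miss at most 6 vertices, and maximal cliques containing them miss none
(`CoverParams.card_le_nine`). By the bound above these have 13 vertices each, so three lines through
`x` partition its neighbours (`CoverParams.exists_pencil`).

*Contradiction.* Let `x` and `z` be antipodal. Every neighbour `w` of `x` has 4 common neighbours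
with `z`, two on each of two lines through `z`, and misses the third line. By double counting, a given
line through `z` is missed by exactly 13 neighbours of `x`. Adjacency is a perfect matching between
the neighbours of `x` on two lines through `x`, and matched vertices miss the same line through `z`
(`CoverParams.miss_of_miss`). So the three lines through `x` contain equally many of these 13
vertices, but 13 is not divisible by 3.
-/

open SimpleGraph Finset

/-- `G` is a distance-regular graph with diameter `D` and intersection numbers
`b i` (number of neighbours of `y` at distance `i+1` from `x` when `dist x y = i`) and
`c i` (number of neighbours of `y` at distance `i-1` from `x` when `dist x y = i`). -/
def IsDRG {V : Type*} [Fintype V] (G : SimpleGraph V) (D : ℕ) (b c : ℕ → ℕ) : Prop :=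
  G.Connected ∧
  (∃ x y : V, G.dist x y = D) ∧
  (∀ x y : V, G.dist x y ≤ D) ∧
  c 0 = 0 ∧ c 1 = 1 ∧ b D = 0 ∧
  (∀ i ≤ D, ∀ x y : V, G.dist x y = i →
    {z : V | G.Adj y z ∧ G.dist x z = i - 1}.ncard = c i ∧
    {z : V | G.Adj y z ∧ G.dist x z = i + 1}.ncard = b i)

/-- `G` contains a `t`-claw: a vertex together with `t` pairwise nonadjacent neighbours
(an induced `K_{1,t}`). -/
def HasClaw {V : Type*} (G : SimpleGraph V) (t : ℕ) : Prop :=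
  ∃ (x : V) (s : Finset V), s.card = t ∧ (∀ y ∈ s, G.Adj x y) ∧
    (s : Set V).Pairwise fun y z => ¬ G.Adj y z

/-- `θ` is an eigenvalue of the (real) adjacency matrix of `G`. -/
def IsAdjEigenvalue {V : Type*} [Fintype V] (G : SimpleGraph V) [DecidableRel G.Adj]
    (θ : ℝ) : Prop :=
  ∃ v : V → ℝ, v ≠ 0 ∧ (G.adjMatrix ℝ).mulVec v = θ • v

/-- `G` contains an induced quadrangle: vertices `x, z₁, y, z₂` with
`dist x y = dist z₁ z₂ = 2` inducing a 4-cycle. -/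
def HasQuadrangle {V : Type*} (G : SimpleGraph V) : Prop :=
  ∃ x z₁ y z₂ : V, G.dist x y = 2 ∧ G.dist z₁ z₂ = 2 ∧
    G.Adj x z₁ ∧ G.Adj z₁ y ∧ G.Adj y z₂ ∧ G.Adj z₂ x

/-- The diameter-3 intersection array `{β₀,β₁,β₂; γ₁,γ₂,γ₃}`. -/
def arr3 (b c : ℕ → ℕ) (β₀ β₁ β₂ γ₁ γ₂ γ₃ : ℕ) : Prop :=
  b 0 = β₀ ∧ b 1 = β₁ ∧ b 2 = β₂ ∧ c 1 = γ₁ ∧ c 2 = γ₂ ∧ c 3 = γ₃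

/-! ### Parameters -/

/-- `y` is antipodal to `x`: the two vertices are distinct, nonadjacent and have no common
neighbour. In a graph of diameter 3 this says that they are at distance 3. -/
def Antipodal {V : Type*} (G : SimpleGraph V) (x y : V) : Prop :=
  x ≠ y ∧ ¬ G.Adj x y ∧ ∀ z, G.Adj x z → ¬ G.Adj y z

open Classical in
/-- The consequences of the intersection array `{39,24,1;1,4,39}` used below, with distances
eliminated: valency 39, `a₁ = 14`, `c₂ = 4`, every neighbour of a vertex antipodal to `x` is at
distance 2 from `x`, every vertex has 6 antipodes, and there are 280 vertices. -/
structure CoverParams {V : Type*} [Fintype V] (G : SimpleGraph V) : Prop where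
  deg : ∀ x, #(G.neighborFinset x) = 39
  lam : ∀ x y, G.Adj x y → #(G.neighborFinset x ∩ G.neighborFinset y) = 14
  mu : ∀ x y z, x ≠ y → ¬ G.Adj x y → G.Adj x z → G.Adj y z →
    #(G.neighborFinset x ∩ G.neighborFinset y) = 4
  anti_nbr : ∀ x y z, Antipodal G x y → G.Adj y z → ∃ u, G.Adj x u ∧ G.Adj z u
  card_anti : ∀ x, #{y | Antipodal G x y} = 6
  card_V : Fintype.card V = 280

open Classical in
lemma coverParams_of_isDRG {V : Type*} [Fintype V] {G : SimpleGraph V} {b c : ℕ → ℕ}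
    (hdrg : IsDRG G 3 b c) (h : arr3 b c 39 24 1 1 4 39) : CoverParams G := by
  obtain ⟨hconn, -, hdiam, -, -, -, hreg⟩ := hdrg
  obtain ⟨hb0, hb1, hb2, hc1, hc2, hc3⟩ := h
  have d0 : ∀ x y, G.dist x y = 0 ↔ x = y := fun x y => hconn.dist_eq_zero_iff
  have d1 : ∀ x y, G.dist x y = 1 ↔ G.Adj x y := fun x y => SimpleGraph.dist_eq_one_iff_adj
  have tri : ∀ x y z, G.dist x z ≤ G.dist x y + G.dist y z := fun x y z => hconn.dist_triangle
  have hcard : ∀ (x y : V) (j : ℕ), {z : V | G.Adj y z ∧ G.dist x z = j}.ncard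
      = #{z ∈ G.neighborFinset y | G.dist x z = j} := by
    intro x y j
    rw [← Set.ncard_coe_finset]
    congr 1
    ext z
    simp
  have hC : ∀ x y, #{z ∈ G.neighborFinset y | G.dist x z = G.dist x y - 1} = c (G.dist x y) :=
    fun x y => by rw [← hcard]; exact (hreg _ (hdiam x y) x y rfl).1
  have hB : ∀ x y, #{z ∈ G.neighborFinset y | G.dist x z = G.dist x y + 1} = b (G.dist x y) :=
    fun x y => by rw [← hcard]; exact (hreg _ (hdiam x y) x y rfl).2
  have two : ∀ x y, G.dist x y = 2 → ∃ u, G.Adj x u ∧ G.Adj y u := by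
    intro x y hxy
    have := hC x y
    rw [hxy, hc2] at this
    obtain ⟨u, hu⟩ := Finset.card_pos.1 (by rw [this]; norm_num :
      0 < #{z ∈ G.neighborFinset y | G.dist x z = 2 - 1})
    simp only [Finset.mem_filter, mem_neighborFinset] at hu
    exact ⟨u, (d1 _ _).1 hu.2, hu.1⟩
  have anti : ∀ x y, Antipodal G x y ↔ G.dist x y = 3 := by
    intro x y
    constructor
    · rintro ⟨h0, h1, h2⟩
      have h3 := hdiam x y
      have h0' := mt (d0 x y).1 h0
      have h1' := mt (d1 x y).1 h1
      have h2' : G.dist x y ≠ 2 := fun e => by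
        obtain ⟨u, hu, hu'⟩ := two x y e
        exact h2 u hu hu'
      omega
    · intro h
      refine ⟨fun e => ?_, fun e => ?_, fun z hz hz' => ?_⟩
      · have := (d0 x y).2 e; omega
      · have := (d1 x y).2 e; omega
      · have h1 := (d1 _ _).2 hz
        have h2 := (d1 _ _).2 hz'.symm
        have := tri x z y; omega
  have hdeg : ∀ x, #(G.neighborFinset x) = 39 := by
    intro x
    have h0 : G.dist x x = 0 := (d0 _ _).2 rfl
    have := hB x x
    rw [h0, hb0] at this
    rw [← this]
    congr 1
    ext z
    simp only [mem_neighborFinset, Finset.mem_filter, zero_add, d1, and_self]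
  have nb1 : ∀ x y, {z ∈ G.neighborFinset y | G.dist x z = 1}
      = G.neighborFinset x ∩ G.neighborFinset y := by
    intro x y
    ext z
    simp only [mem_neighborFinset, Finset.mem_filter, d1, Finset.mem_inter]
    tauto
  have hlam : ∀ x y, G.Adj x y → #(G.neighborFinset x ∩ G.neighborFinset y) = 14 := by
    intro x y hxy
    have e1 : G.dist x y = 1 := (d1 _ _).2 hxy
    have h1 := hC x y
    have h2 := hB x y
    rw [e1, hc1] at h1
    rw [e1, hb1] at h2
    rw [← nb1]
    have h3 := hdeg y
    have hu : G.neighborFinset y = {z ∈ G.neighborFinset y | G.dist x z = 1 - 1} ∪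
        ({z ∈ G.neighborFinset y | G.dist x z = 1} ∪
        {z ∈ G.neighborFinset y | G.dist x z = 1 + 1}) := by
      ext z
      simp only [mem_neighborFinset, Finset.mem_union, Finset.mem_filter]
      constructor
      · intro hz
        have := tri x y z
        have := (d1 _ _).2 hz
        have : G.dist x z = 0 ∨ G.dist x z = 1 ∨ G.dist x z = 2 := by omega
        simp only [hz, true_and]
        omega
      · tauto
    rw [hu, Finset.card_union_of_disjoint, Finset.card_union_of_disjoint] at h3
    · omega
    · rw [Finset.disjoint_filter]; intros; omega
    · rw [← Finset.filter_or, Finset.disjoint_filter]; intros; omega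
  have hk2 : ∀ x, #{y | G.dist x y = 2} = 234 := by
    intro x
    have := Finset.card_mul_eq_card_mul (s := G.neighborFinset x)
      (t := ({y | G.dist x y = 2} : Finset V)) (m := 24) (n := 4) G.Adj ?_ ?_
    · rw [hdeg] at this; omega
    · intro y hy
      have e : G.dist x y = 1 := (d1 _ _).2 (by simpa using hy)
      have := hB x y
      rw [e, hb1] at this
      rw [← this]
      congr 1
      ext z
      simp [Finset.bipartiteAbove, and_comm]
    · intro y hy
      have e : G.dist x y = 2 := by simpa using hy
      have := hC x y
      rw [e, hc2] at this
      rw [← this]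
      congr 1
      ext z
      simp [Finset.bipartiteBelow, and_comm, d1, G.adj_comm]
  have hk3 : ∀ x, #{y | G.dist x y = 3} = 6 := by
    intro x
    have := Finset.card_mul_eq_card_mul (s := ({y | G.dist x y = 2} : Finset V))
      (t := ({y | G.dist x y = 3} : Finset V)) (m := 1) (n := 39) G.Adj ?_ ?_
    · rw [hk2] at this; omega
    · intro y hy
      have e : G.dist x y = 2 := by simpa using hy
      have := hB x y
      rw [e, hb2] at this
      rw [← this]
      congr 1
      ext z
      simp [Finset.bipartiteAbove, and_comm]
    · intro y hy
      have e : G.dist x y = 3 := by simpa using hy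
      have := hC x y
      rw [e, hc3] at this
      rw [← this]
      congr 1
      ext z
      simp [Finset.bipartiteBelow, and_comm, G.adj_comm]
  refine ⟨hdeg, hlam, ?_, ?_, ?_, ?_⟩
  · intro x y z hne hadj hxz hyz
    have e : G.dist x y = 2 := by
      have h1 := (d1 _ _).2 hxz
      have h2 := (d1 _ _).2 hyz.symm
      have := tri x z y
      have := mt (d0 x y).1 hne
      have := mt (d1 x y).1 hadj
      omega
    have := hC x y
    rw [e, hc2] at this
    rw [← nb1, ← this]
  · intro x y z hxy hyz
    rw [anti] at hxy
    have := hC x y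
    rw [hxy, hc3, ← hdeg y, Finset.card_filter_eq_iff] at this
    exact two x z (this z (by simpa using hyz))
  · intro x
    simp only [anti]
    exact hk3 x
  · have x : V := hconn.nonempty.some
    have hsum : Fintype.card V = ∑ i ∈ Finset.range 4, #{y | G.dist x y = i} := by
      rw [← Finset.card_univ]
      refine Finset.card_eq_sum_card_fiberwise (fun y _ => ?_)
      have := hdiam x y
      simp only [Finset.coe_range, Set.mem_Iio]
      omega
    have e0 : #{y | G.dist x y = 0} = 1 := by
      rw [Finset.card_eq_one]
      exact ⟨x, by ext y; simp [d0, eq_comm]⟩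
    have e1 : #{y | G.dist x y = 1} = 39 := by
      rw [← hdeg x]
      congr 1
      ext y
      simp [d1]
    rw [hsum]
    simp only [Finset.sum_range_succ, Finset.sum_range_zero, hk2, hk3, e0, e1]

/-! ### Cliques and the Delsarte bound -/

section Cliques

open Classical

lemma Antipodal.symm {V : Type*} {G : SimpleGraph V} {x y : V} (h : Antipodal G x y) : Antipodal G y x :=
  ⟨h.1.symm, fun e => h.2.1 e.symm, fun z hz hz' => h.2.2 z hz' hz⟩

variable {V : Type*} [Fintype V] {G : SimpleGraph V}

/-- The antipode sets of the members of a clique `C` are disjoint from `C` and from each other, so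
`280 - 7 |C|` vertices lie outside `C` and are not antipodal to a member of `C`. -/
lemma CoverParams.card_outside (h : CoverParams G) {C : Finset V}
    (hC : G.IsClique (C : Set V)) :
    #{v | v ∉ C ∧ ∀ c ∈ C, ¬ Antipodal G c v} + 7 * #C = 280 := by
  have hdisj : #(C.biUnion fun c => {v | Antipodal G c v}) = 6 * #C := by
    rw [Finset.card_biUnion, Finset.sum_congr rfl (fun c _ => h.card_anti c)]
    · simp [mul_comm]
    · intro c hc c' hc' hne
      rw [Function.onFun, Finset.disjoint_left]
      intro v hv hv'
      simp only [Finset.mem_filter, Finset.mem_univ, true_and] at hv hv'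
      obtain ⟨u, hu, hu'⟩ := h.anti_nbr v c c' hv.symm (hC hc hc' hne)
      exact hv'.2.2 u hu' hu
  have hCd : Disjoint C (C.biUnion fun c => ({v | Antipodal G c v} : Finset V)) := by
    rw [Finset.disjoint_left]
    intro v hv hv'
    simp only [Finset.mem_biUnion, Finset.mem_filter, Finset.mem_univ, true_and] at hv'
    obtain ⟨c, hc, hcv⟩ := hv'
    exact hcv.2.1 (hC hc hv hcv.1)
  have hcompl : ({v | v ∉ C ∧ ∀ c ∈ C, ¬ Antipodal G c v} : Finset V)
      = (C ∪ C.biUnion fun c => ({v | Antipodal G c v} : Finset V))ᶜ := by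
    ext v
    simp
  have := Finset.card_compl_add_card (C ∪ C.biUnion fun c => ({v | Antipodal G c v} : Finset V))
  rw [← hcompl, Finset.card_union_of_disjoint hCd, hdisj, h.card_V] at this
  omega

/-- The second moment behind the Delsarte clique bound: the number of neighbours in a clique `C`
of the vertices outside `C` without antipode in `C` deviates from 2 by a quantity which depends on
`|C|` only, vanishes for `|C| = 14` and would be negative for `|C| = 15`. -/
lemma CoverParams.sum_sq (h : CoverParams G) {C : Finset V} (hC : G.IsClique (C : Set V)) :
    ∑ v with v ∉ C ∧ ∀ c ∈ C, ¬ Antipodal G c v, ((#(G.neighborFinset v ∩ C) : ℤ) - 2) ^ 2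
      = (#C : ℤ) * (#C - 1) * (16 - #C) - 3 * (#C * (40 - #C)) + 4 * (280 - 7 * #C) := by
  set U : Finset V := {v | v ∉ C ∧ ∀ c ∈ C, ¬ Antipodal G c v} with hU
  have hUc : (#U : ℤ) = 280 - 7 * #C := by
    have := h.card_outside hC
    rw [← hU] at this
    omega
  -- A vertex with a neighbour in the clique has no antipode in the clique.
  have memU : ∀ v c, c ∈ C → G.Adj c v → v ∉ C → v ∈ U := by
    intro v c hc hcv hv
    rw [hU, Finset.mem_filter]
    refine ⟨Finset.mem_univ _, hv, fun c' hc' hcv' => ?_⟩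
    by_cases e : c' = c
    · subst e; exact hcv'.2.1 hcv
    · exact hcv'.2.2 c (hC hc' hc e) hcv.symm
  have hn : ∀ v, (#(G.neighborFinset v ∩ C) : ℤ) = ∑ c ∈ C, if G.Adj c v then (1 : ℤ) else 0 := by
    intro v
    rw [Finset.sum_boole]
    congr 2
    ext c
    simp [and_comm, G.adj_comm]
  have h1 : ∀ c ∈ C, ∑ v ∈ U, (if G.Adj c v then (1 : ℤ) else 0) = 40 - #C := by
    intro c hc
    rw [Finset.sum_boole]
    have e : G.neighborFinset c = {v ∈ U | G.Adj c v} ∪ C.erase c := by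
      ext v
      simp only [mem_neighborFinset, Finset.mem_union, Finset.mem_filter, Finset.mem_erase]
      constructor
      · intro hv
        by_cases hvC : v ∈ C
        · exact Or.inr ⟨hv.ne', hvC⟩
        · exact Or.inl ⟨memU v c hc hv hvC, hv⟩
      · rintro (hv | hv)
        · exact hv.2
        · exact hC hc hv.2 hv.1.symm
    have hd : Disjoint {v ∈ U | G.Adj c v} (C.erase c) := by
      rw [Finset.disjoint_left]
      intro v hv hv'
      simp only [hU, Finset.mem_filter] at hv
      exact hv.1.2.1 (Finset.mem_of_mem_erase hv')
    have := h.deg c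
    rw [e, Finset.card_union_of_disjoint hd, Finset.card_erase_of_mem hc] at this
    have := Finset.card_pos.2 ⟨c, hc⟩
    omega
  have h2 : ∀ c ∈ C, ∀ c' ∈ C, c ≠ c' →
      ∑ v ∈ U, (if G.Adj c v then (1 : ℤ) else 0) * (if G.Adj c' v then (1 : ℤ) else 0)
        = 16 - #C := by
    intro c hc c' hc' hne
    have hm : ∀ v, (if G.Adj c v then (1 : ℤ) else 0) * (if G.Adj c' v then (1 : ℤ) else 0)
        = if G.Adj c v ∧ G.Adj c' v then 1 else 0 := by
      intro v
      by_cases a : G.Adj c v <;> by_cases a' : G.Adj c' v <;> simp [a, a']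
    simp only [hm]
    rw [Finset.sum_boole]
    have e : G.neighborFinset c ∩ G.neighborFinset c'
        = {v ∈ U | G.Adj c v ∧ G.Adj c' v} ∪ (C.erase c).erase c' := by
      ext v
      simp only [mem_neighborFinset, Finset.mem_union, Finset.mem_filter, Finset.mem_erase,
        Finset.mem_inter]
      constructor
      · rintro ⟨hv, hv'⟩
        by_cases hvC : v ∈ C
        · exact Or.inr ⟨hv'.ne', hv.ne', hvC⟩
        · exact Or.inl ⟨memU v c hc hv hvC, hv, hv'⟩
      · rintro (hv | hv)
        · exact hv.2
        · exact ⟨hC hc hv.2.2 hv.2.1.symm, hC hc' hv.2.2 hv.1.symm⟩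
    have hd : Disjoint {v ∈ U | G.Adj c v ∧ G.Adj c' v} ((C.erase c).erase c') := by
      rw [Finset.disjoint_left]
      intro v hv hv'
      simp only [hU, Finset.mem_filter] at hv
      exact hv.1.2.1 (Finset.mem_of_mem_erase (Finset.mem_of_mem_erase hv'))
    have hmem : c' ∈ C.erase c := Finset.mem_erase.2 ⟨hne.symm, hc'⟩
    have := h.lam c c' (hC hc hc' hne)
    rw [e, Finset.card_union_of_disjoint hd, Finset.card_erase_of_mem hmem,
      Finset.card_erase_of_mem hc] at this
    have h3 := Finset.card_pos.2 ⟨c', hmem⟩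
    rw [Finset.card_erase_of_mem hc] at h3
    omega
  have s1 : ∑ v ∈ U, (#(G.neighborFinset v ∩ C) : ℤ) = #C * (40 - #C) := by
    simp only [hn]
    rw [Finset.sum_comm, Finset.sum_congr rfl h1, Finset.sum_const, nsmul_eq_mul]
  have s2 : ∑ v ∈ U, (#(G.neighborFinset v ∩ C) : ℤ) ^ 2
      = #C * ((40 - #C) + (#C - 1) * (16 - #C)) := by
    simp only [hn, sq, Finset.sum_mul_sum]
    rw [Finset.sum_comm]
    have : ∀ c ∈ C, ∑ v ∈ U, ∑ c' ∈ C,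
        (if G.Adj c v then (1 : ℤ) else 0) * (if G.Adj c' v then (1 : ℤ) else 0)
          = (40 - #C) + (#C - 1) * (16 - #C) := by
      intro c hc
      rw [Finset.sum_comm, ← Finset.add_sum_erase _ _ hc]
      congr 1
      · rw [← h1 c hc]
        refine Finset.sum_congr rfl fun v _ => ?_
        split_ifs <;> simp
      · rw [Finset.sum_congr rfl fun c' hc' =>
          h2 c hc c' (Finset.mem_of_mem_erase hc') (Finset.ne_of_mem_erase hc').symm]
        have := Finset.card_pos.2 ⟨c, hc⟩
        rw [Finset.sum_const, Finset.card_erase_of_mem hc, nsmul_eq_mul, Nat.cast_sub this]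
        simp
    rw [Finset.sum_congr rfl this, Finset.sum_const, nsmul_eq_mul]
  have hexp : ∀ v, ((#(G.neighborFinset v ∩ C) : ℤ) - 2) ^ 2
      = (#(G.neighborFinset v ∩ C) : ℤ) ^ 2 - 4 * (#(G.neighborFinset v ∩ C) : ℤ) + 4 := by
    intro v; ring
  simp only [hexp]
  rw [Finset.sum_add_distrib, Finset.sum_sub_distrib, ← Finset.mul_sum, s1, s2]
  simp only [Finset.sum_const, nsmul_eq_mul, hUc]
  ring

/-- The Delsarte bound `1 + 39 / 3 = 14` on the size of a clique. -/
lemma CoverParams.clique_le (h : CoverParams G) {C : Finset V} (hC : G.IsClique (C : Set V)) :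
    #C ≤ 14 := by
  by_contra! hlt
  obtain ⟨D, hDC, hD⟩ := Finset.exists_subset_card_eq (show 15 ≤ #C by omega)
  have hDq : G.IsClique (D : Set V) := hC.subset (by exact_mod_cast hDC)
  have h1 := h.sum_sq hDq
  have h2 : 0 ≤ ∑ v with v ∉ D ∧ ∀ c ∈ D, ¬ Antipodal G c v,
      ((#(G.neighborFinset v ∩ D) : ℤ) - 2) ^ 2 := Finset.sum_nonneg fun v _ => sq_nonneg _
  rw [h1, hD] at h2
  norm_num at h2

/-- A line is a clique attaining the Delsarte bound. -/
def IsLine (G : SimpleGraph V) (L : Finset V) : Prop :=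
  G.IsClique (L : Set V) ∧ #L = 14

lemma CoverParams.line_two (h : CoverParams G) {L : Finset V} (hL : IsLine G L) {v : V}
    (hv : v ∉ L) (hanti : ∀ c ∈ L, ¬ Antipodal G c v) : #(G.neighborFinset v ∩ L) = 2 := by
  have h1 := h.sum_sq hL.1
  rw [hL.2] at h1
  norm_num at h1
  rw [Finset.sum_eq_zero_iff_of_nonneg fun v _ => sq_nonneg _] at h1
  have := h1 v (by simpa using ⟨hv, hanti⟩)
  have := pow_eq_zero_iff (two_ne_zero) |>.1 this
  omega

/-- A vertex outside a line which is adjacent to a point of the line is adjacent to exactly two. -/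
lemma CoverParams.line_two_of_adj (h : CoverParams G) {L : Finset V} (hL : IsLine G L) {v u : V}
    (hv : v ∉ L) (hu : u ∈ L) (huv : G.Adj v u) : #(G.neighborFinset v ∩ L) = 2 := by
  refine h.line_two hL hv fun c hc hcv => ?_
  by_cases e : c = u
  · subst e; exact hcv.2.1 huv.symm
  · exact hcv.2.2 u (hL.1 hc hu e) huv

lemma CoverParams.line_zero_or_two (h : CoverParams G) {L : Finset V} (hL : IsLine G L) {v : V}
    (hv : v ∉ L) : #(G.neighborFinset v ∩ L) = 0 ∨ #(G.neighborFinset v ∩ L) = 2 := by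
  rcases (G.neighborFinset v ∩ L).eq_empty_or_nonempty with h0 | ⟨u, hu⟩
  · left; simp [h0]
  · right
    simp only [Finset.mem_inter, mem_neighborFinset] at hu
    exact h.line_two_of_adj hL hv hu.2 hu.1

/-- Two lines sharing an edge `pq` are equal: otherwise they would meet in `{p, q}` only and give
`p` and `q` at least 24 common neighbours. -/
lemma CoverParams.line_unique (h : CoverParams G) {L M : Finset V} (hL : IsLine G L)
    (hM : IsLine G M) {p q : V} (hpq : p ≠ q) (hpL : p ∈ L) (hqL : q ∈ L) (hpM : p ∈ M)
    (hqM : q ∈ M) : L = M := by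
  by_contra hne
  obtain ⟨v, hvM, hvL⟩ : ∃ v ∈ M, v ∉ L := by
    by_contra! hsub
    exact hne (Finset.eq_of_subset_of_card_le hsub (by rw [hL.2, hM.2])).symm
  have hvp : G.Adj v p := hM.1 hvM hpM (by rintro rfl; exact hvL hpL)
  have h2 := h.line_two_of_adj hL hvL hpL hvp
  have hsub : L ∩ M ⊆ G.neighborFinset v ∩ L := by
    intro u hu
    rw [Finset.mem_inter] at hu
    simp only [Finset.mem_inter, mem_neighborFinset]
    exact ⟨hM.1 hvM hu.2 (by rintro rfl; exact hvL hu.1), hu.1⟩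
  have hint := Finset.card_le_card hsub
  have hun := Finset.card_union_add_card_inter L M
  have hsub2 : ((L ∪ M).erase p).erase q ⊆ G.neighborFinset p ∩ G.neighborFinset q := by
    intro u hu
    simp only [Finset.mem_erase, Finset.mem_union] at hu
    simp only [Finset.mem_inter, mem_neighborFinset]
    rcases hu with ⟨huq, hup, hu | hu⟩
    · exact ⟨hL.1 hpL hu hup.symm, hL.1 hqL hu huq.symm⟩
    · exact ⟨hM.1 hpM hu hup.symm, hM.1 hqM hu huq.symm⟩
  have hc := Finset.card_le_card hsub2
  rw [h.lam p q (hL.1 hpL hqL hpq)] at hc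
  have e1 := Finset.pred_card_le_card_erase (s := L ∪ M) (a := p)
  have e2 := Finset.pred_card_le_card_erase (s := (L ∪ M).erase p) (a := q)
  rw [hL.2, hM.2] at hun
  omega

end Cliques

/-! ### Local graphs -/

section Local

open Classical

variable {V : Type*} [Fintype V] {G : SimpleGraph V}

/-- The closed neighbourhood of `y` inside the local graph at `x`. -/
noncomputable def closedNbhd (G : SimpleGraph V) (x y : V) : Finset V :=
  {u ∈ G.neighborFinset x | u = y ∨ G.Adj y u}

lemma mem_closedNbhd {x y u : V} :
    u ∈ closedNbhd G x y ↔ G.Adj x u ∧ (u = y ∨ G.Adj y u) := by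
  simp [closedNbhd]

lemma CoverParams.card_closedNbhd (h : CoverParams G) {x y : V} (hxy : G.Adj x y) :
    #(closedNbhd G x y) = 15 := by
  have e : closedNbhd G x y = insert y (G.neighborFinset x ∩ G.neighborFinset y) := by
    ext u
    simp only [mem_closedNbhd, Finset.mem_insert, Finset.mem_inter, mem_neighborFinset]
    constructor
    · tauto
    · rintro (rfl | hu)
      · exact ⟨hxy, Or.inl rfl⟩
      · tauto
  rw [e, Finset.card_insert_of_notMem (by simp), h.lam x y hxy]

/-- Nonadjacent vertices of the local graph have at most `c₂ - 1 = 3` common neighbours in it. -/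
lemma CoverParams.card_inter_le (h : CoverParams G) {x y z : V} (hxy : G.Adj x y)
    (hxz : G.Adj x z) (hne : y ≠ z) (hyz : ¬ G.Adj y z) :
    #(closedNbhd G x y ∩ closedNbhd G x z) ≤ 3 := by
  have hsub : closedNbhd G x y ∩ closedNbhd G x z
      ⊆ (G.neighborFinset y ∩ G.neighborFinset z).erase x := by
    intro u hu
    simp only [Finset.mem_inter, mem_closedNbhd] at hu
    simp only [Finset.mem_erase, Finset.mem_inter, mem_neighborFinset]
    obtain ⟨⟨hu, h1⟩, -, h2⟩ := hu
    refine ⟨hu.ne', ?_, ?_⟩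
    · rcases h1 with rfl | h1
      · rcases h2 with rfl | h2
        · exact absurd rfl hne
        · exact absurd h2.symm hyz
      · exact h1
    · rcases h2 with rfl | h2
      · rcases h1 with rfl | h1
        · exact absurd rfl hne
        · exact absurd h1 hyz
      · exact h2
  have := Finset.card_le_card hsub
  rw [Finset.card_erase_of_mem (by simp [hxy.symm, hxz.symm]),
    h.mu y z x hne hyz hxy.symm hxz.symm] at this
  exact this

/-- Three pairwise nonadjacent neighbours of `x`. -/
structure Coclique3 (G : SimpleGraph V) (x a b c : V) : Prop where
  xa : G.Adj x a
  xb : G.Adj x b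
  xc : G.Adj x c
  neab : a ≠ b
  neac : a ≠ c
  nebc : b ≠ c
  ab : ¬ G.Adj a b
  ac : ¬ G.Adj a c
  bc : ¬ G.Adj b c

lemma Coclique3.rotate {V : Type*} {G : SimpleGraph V} {x a b c : V} (k : Coclique3 G x a b c) : Coclique3 G x b c a :=
  ⟨k.xb, k.xc, k.xa, k.nebc, k.neab.symm, k.neac.symm, k.bc, fun e => k.ab e.symm,
    fun e => k.ac e.symm⟩

/-- The local graph has no coclique of size 4, by the Bonferroni inequality
`4 * 15 - 6 * 3 = 42 > 39`: the closed neighbourhoods of a 3-coclique cover the local graph. -/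
lemma CoverParams.cover (h : CoverParams G) {x a b c : V} (k : Coclique3 G x a b c) :
    closedNbhd G x a ∪ closedNbhd G x b ∪ closedNbhd G x c = G.neighborFinset x := by
  have hsub : ∀ y, closedNbhd G x y ⊆ G.neighborFinset x := fun y => Finset.filter_subset _ _
  refine Finset.Subset.antisymm
    (Finset.union_subset (Finset.union_subset (hsub a) (hsub b)) (hsub c)) fun d hd => ?_
  by_contra hdn
  have hxd : G.Adj x d := by simpa using hd
  simp only [Finset.mem_union, mem_closedNbhd, not_or, not_and, hxd, true_implies] at hdn
  obtain ⟨⟨⟨da, nda⟩, db, ndb⟩, dc, ndc⟩ := hdn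
  have ca := h.card_closedNbhd k.xa
  have cb := h.card_closedNbhd k.xb
  have cc := h.card_closedNbhd k.xc
  have cd := h.card_closedNbhd hxd
  have iab := h.card_inter_le k.xa k.xb k.neab k.ab
  have iac := h.card_inter_le k.xa k.xc k.neac k.ac
  have ibc := h.card_inter_le k.xb k.xc k.nebc k.bc
  have iad := h.card_inter_le k.xa hxd (Ne.symm da) nda
  have ibd := h.card_inter_le k.xb hxd (Ne.symm db) ndb
  have icd := h.card_inter_le k.xc hxd (Ne.symm dc) ndc
  set A := closedNbhd G x a
  set B := closedNbhd G x b
  set C := closedNbhd G x c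
  set D := closedNbhd G x d
  have u1 := Finset.card_union_add_card_inter A B
  have u2 := Finset.card_union_add_card_inter (A ∪ B) C
  have u3 := Finset.card_union_add_card_inter (A ∪ B ∪ C) D
  have v2 : #((A ∪ B) ∩ C) ≤ #(A ∩ C) + #(B ∩ C) := by
    rw [Finset.union_inter_distrib_right]; exact Finset.card_union_le _ _
  have v3 : #((A ∪ B ∪ C) ∩ D) ≤ #(A ∩ D) + #(B ∩ D) + #(C ∩ D) := by
    rw [Finset.union_inter_distrib_right, Finset.union_inter_distrib_right]
    exact (Finset.card_union_le _ _).trans (Nat.add_le_add_right (Finset.card_union_le _ _) _)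
  have tot : #(A ∪ B ∪ C ∪ D) ≤ 39 := by
    rw [← h.deg x]
    exact Finset.card_le_card (Finset.union_subset
      (Finset.union_subset (Finset.union_subset (hsub a) (hsub b)) (hsub c)) (hsub d))
  omega

lemma CoverParams.exists_coclique3 (h : CoverParams G) (x : V) :
    ∃ a b c, Coclique3 G x a b c := by
  have hsub : ∀ y, closedNbhd G x y ⊆ G.neighborFinset x := fun y => Finset.filter_subset _ _
  obtain ⟨a, ha⟩ := Finset.card_pos.1 (by rw [h.deg x]; norm_num : 0 < #(G.neighborFinset x))
  have xa : G.Adj x a := by simpa using ha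
  have ca := h.card_closedNbhd xa
  obtain ⟨b, hb, hb'⟩ := Finset.exists_mem_notMem_of_card_lt_card
    (by rw [ca, h.deg x]; norm_num : #(closedNbhd G x a) < #(G.neighborFinset x))
  have xb : G.Adj x b := by simpa using hb
  have cb := h.card_closedNbhd xb
  obtain ⟨c, hc, hc'⟩ := Finset.exists_mem_notMem_of_card_lt_card
    (by rw [h.deg x]; exact lt_of_le_of_lt (Finset.card_union_le _ _) (by omega) :
      #(closedNbhd G x a ∪ closedNbhd G x b) < #(G.neighborFinset x))
  have xc : G.Adj x c := by simpa using hc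
  simp only [Finset.mem_union, mem_closedNbhd, not_or, not_and, xb, xc, true_implies] at hb' hc'
  exact ⟨a, b, c, xa, xb, xc, Ne.symm hb'.1, Ne.symm hc'.1.1, Ne.symm hc'.2.1, hb'.2, hc'.1.2,
    hc'.2.2⟩

/-- The vertices of the local graph at `x` equal or adjacent to `a`, but neither to `b` nor `c`. -/
noncomputable def privateNbhd (G : SimpleGraph V) (x a b c : V) : Finset V :=
  closedNbhd G x a \ (closedNbhd G x b ∪ closedNbhd G x c)

lemma mem_privateNbhd {x a b c u : V} : u ∈ privateNbhd G x a b c ↔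
    u ∈ closedNbhd G x a ∧ u ∉ closedNbhd G x b ∧ u ∉ closedNbhd G x c := by
  simp [privateNbhd]

/-- Two nonadjacent vertices of the private neighbourhood of `a` would form a 4-coclique together
with `b` and `c`. -/
lemma CoverParams.private_clique (h : CoverParams G) {x a b c : V} (k : Coclique3 G x a b c) :
    G.IsClique (privateNbhd G x a b c : Set V) := by
  intro u hu v hv hne
  by_contra huv
  simp only [Finset.mem_coe, mem_privateNbhd] at hu hv
  have xu := (mem_closedNbhd.1 hu.1).1
  have xv := (mem_closedNbhd.1 hv.1).1
  simp only [mem_closedNbhd, xu, xv, true_and, not_or] at hu hv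
  have kc : Coclique3 G x u b c :=
    ⟨xu, k.xb, k.xc, hu.2.1.1, hu.2.2.1, k.nebc, fun e => hu.2.1.2 e.symm,
      fun e => hu.2.2.2 e.symm, k.bc⟩
  have hmem : v ∈ closedNbhd G x u ∪ closedNbhd G x b ∪ closedNbhd G x c := by
    rw [h.cover kc]; simpa using xv
  simp only [Finset.mem_union, mem_closedNbhd, xv, true_and] at hmem
  rcases hmem with ((e | e) | e) | e
  · exact hne e.symm
  · exact huv e
  · rcases e with e | e
    · exact hv.2.1.1 e
    · exact hv.2.1.2 e
  · rcases e with e | e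
    · exact hv.2.2.1 e
    · exact hv.2.2.2 e

lemma CoverParams.private_card (h : CoverParams G) {x a b c : V} (k : Coclique3 G x a b c) :
    9 ≤ #(privateNbhd G x a b c) := by
  have ca := h.card_closedNbhd k.xa
  have iab := h.card_inter_le k.xa k.xb k.neab k.ab
  have iac := h.card_inter_le k.xa k.xc k.neac k.ac
  have h1 := Finset.card_sdiff_add_card_inter (closedNbhd G x a)
    (closedNbhd G x b ∪ closedNbhd G x c)
  rw [Finset.inter_union_distrib_left] at h1
  have := Finset.card_union_le (closedNbhd G x a ∩ closedNbhd G x b)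
    (closedNbhd G x a ∩ closedNbhd G x c)
  rw [privateNbhd]
  omega

lemma self_mem_private {x a b c : V} (k : Coclique3 G x a b c) :
    a ∈ privateNbhd G x a b c := by
  simp only [mem_privateNbhd, mem_closedNbhd, k.xa, true_and, not_or]
  exact ⟨Or.inl trivial, ⟨k.neab, fun e => k.ab e.symm⟩, k.neac, fun e => k.ac e.symm⟩

/-- The three private neighbourhoods of a 3-coclique cover all but at most 6 vertices of the local
graph: the closed neighbourhoods have total size `45 = 39 + 6`. -/
lemma CoverParams.private_cover (h : CoverParams G) {x a b c : V} (k : Coclique3 G x a b c) :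
    #(G.neighborFinset x \
      (privateNbhd G x a b c ∪ privateNbhd G x b c a ∪ privateNbhd G x c a b)) ≤ 6 := by
  have ca := h.card_closedNbhd k.xa
  have cb := h.card_closedNbhd k.xb
  have cc := h.card_closedNbhd k.xc
  have cov := h.cover k
  set R := G.neighborFinset x \
      (privateNbhd G x a b c ∪ privateNbhd G x b c a ∪ privateNbhd G x c a b) with hR
  have hsub : ∀ y, closedNbhd G x y ⊆ G.neighborFinset x := fun y => Finset.filter_subset _ _
  have hind : ∀ y, #(closedNbhd G x y)
      = ∑ u ∈ G.neighborFinset x, if u ∈ closedNbhd G x y then 1 else 0 := by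
    intro y
    rw [Finset.sum_boole, Finset.filter_mem_eq_inter, Finset.inter_eq_right.2 (hsub y)]
    rfl
  have hRi : #R = ∑ u ∈ G.neighborFinset x, if u ∈ R then 1 else 0 := by
    rw [Finset.sum_boole, Finset.filter_mem_eq_inter,
      Finset.inter_eq_right.2 (Finset.sdiff_subset)]
    rfl
  have hW : #(G.neighborFinset x) = ∑ u ∈ G.neighborFinset x, 1 := by simp
  have key : #(G.neighborFinset x) + #R
      ≤ #(closedNbhd G x a) + #(closedNbhd G x b) + #(closedNbhd G x c) := by
    rw [hW, hRi, hind a, hind b, hind c, ← Finset.sum_add_distrib, ← Finset.sum_add_distrib,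
      ← Finset.sum_add_distrib]
    refine Finset.sum_le_sum fun u hu => ?_
    have hu' := hu
    rw [← cov] at hu'
    simp only [Finset.mem_union] at hu'
    have hRu : u ∈ R ↔ ¬ ((u ∈ privateNbhd G x a b c ∨ u ∈ privateNbhd G x b c a)
        ∨ u ∈ privateNbhd G x c a b) := by
      rw [hR, Finset.mem_sdiff, Finset.mem_union, Finset.mem_union]
      tauto
    simp only [mem_privateNbhd] at hRu
    by_cases p : u ∈ closedNbhd G x a <;> by_cases q : u ∈ closedNbhd G x b <;>
      by_cases r : u ∈ closedNbhd G x c <;> simp [p, q, r] at hRu hu' ⊢ <;> simp [hRu]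
  rw [h.deg] at key
  omega

/-- `C` is a maximal clique of the local graph at `x`. -/
structure IsMaxLocal (G : SimpleGraph V) (x : V) (C : Finset V) : Prop where
  sub : ∀ u ∈ C, G.Adj x u
  clique : G.IsClique (C : Set V)
  max : ∀ v, G.Adj x v → v ∉ C → ∃ c ∈ C, ¬ G.Adj v c

lemma exists_isMaxLocal {x : V} {A : Finset V} (hA : ∀ u ∈ A, G.Adj x u)
    (hq : G.IsClique (A : Set V)) : ∃ C, A ⊆ C ∧ IsMaxLocal G x C := by
  obtain ⟨C, hAC, hC⟩ := Finset.exists_le_maximal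
    ({C | (∀ u ∈ C, G.Adj x u) ∧ G.IsClique (C : Set V)} : Finset (Finset V))
    (a := A) (by simpa using ⟨hA, hq⟩)
  have hC1 := hC.1
  simp only [Finset.mem_filter, Finset.mem_univ, true_and] at hC1
  refine ⟨C, hAC, hC1.1, hC1.2, fun v hv hvC => ?_⟩
  by_contra! hall
  refine hvC (hC.2 (y := insert v C) ?_ (Finset.subset_insert v C) (Finset.mem_insert_self v C))
  simp only [Finset.mem_filter, Finset.mem_univ, true_and, Finset.coe_insert]
  refine ⟨fun u hu => ?_, ?_⟩
  · rcases Finset.mem_insert.1 hu with rfl | hu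
    · exact hv
    · exact hC1.1 u hu
  · rw [SimpleGraph.isClique_insert]
    exact ⟨hC1.2, fun c hc _ => hall c hc⟩

/-- A vertex outside a maximal clique of the local graph has at most 3 neighbours in it, since
those are common neighbours with a nonneighbour in the clique. -/
lemma CoverParams.card_nbr_le (h : CoverParams G) {x v : V} {C : Finset V}
    (hC : IsMaxLocal G x C) (hv : G.Adj x v) (hvC : v ∉ C) :
    #(G.neighborFinset v ∩ C) ≤ 3 := by
  obtain ⟨c, hc, hvc⟩ := hC.max v hv hvC
  refine le_trans (Finset.card_le_card fun u hu => ?_)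
    (h.card_inter_le hv (hC.sub c hc) (by rintro rfl; exact hvC hc) hvc)
  simp only [Finset.mem_inter, mem_neighborFinset, mem_closedNbhd] at hu ⊢
  have : c ≠ u := by rintro rfl; exact hvc hu.1
  exact ⟨⟨hC.sub u hu.2, Or.inr hu.1⟩, hC.sub u hu.2, Or.inr (hC.clique hc hu.2 this)⟩

/-- If the maximal cliques extending the private neighbourhoods of a 3-coclique missed a vertex
`r`, then `r` and the at most 5 other missed vertices would form a clique with the 3 neighbours of
`r` in any one of these maximal cliques, which bounds the size of the latter by 9. -/
lemma CoverParams.card_le_nine (h : CoverParams G) {x a b c r : V} (k : Coclique3 G x a b c)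
    {CA CB CC : Finset V} (hA : privateNbhd G x a b c ⊆ CA) (hB : privateNbhd G x b c a ⊆ CB)
    (hC : privateNbhd G x c a b ⊆ CC) (mA : IsMaxLocal G x CA) (mB : IsMaxLocal G x CB)
    (mC : IsMaxLocal G x CC) (hr : r ∈ G.neighborFinset x \ (CA ∪ CB ∪ CC)) : #CC ≤ 9 := by
  set R := G.neighborFinset x \ (CA ∪ CB ∪ CC) with hRdef
  have hR6 : #R ≤ 6 := le_trans (Finset.card_le_card (Finset.sdiff_subset_sdiff subset_rfl
    (Finset.union_subset_union (Finset.union_subset_union hA hB) hC))) (h.private_cover k)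
  have hr' := hr
  simp only [hRdef, Finset.mem_sdiff, mem_neighborFinset, Finset.mem_union, not_or] at hr'
  obtain ⟨xr, ⟨rA, rB⟩, rC⟩ := hr'
  have nA := h.card_nbr_le mA xr rA
  have nB := h.card_nbr_le mB xr rB
  have nC := h.card_nbr_le mC xr rC
  obtain ⟨a', ha', ha'r⟩ := Finset.exists_mem_notMem_of_card_lt_card
    (lt_of_le_of_lt nA (lt_of_lt_of_le (by norm_num) (h.private_card k)))
  have a'A := hA ha'
  have xa' := mA.sub a' a'A
  have a'B : a' ∉ CB := by
    intro hm
    have hb := hB (self_mem_private k.rotate)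
    rw [mem_privateNbhd] at ha'
    refine ha'.2.1 (mem_closedNbhd.2 ⟨xa', ?_⟩)
    by_cases e : a' = b
    · exact Or.inl e
    · exact Or.inr (mB.clique hb hm (Ne.symm e))
  have nB' := h.card_nbr_le mB xa' a'B
  obtain ⟨b', hb', hb'r⟩ := Finset.exists_mem_notMem_of_card_lt_card
    (lt_of_le_of_lt (Finset.card_union_le _ _) (lt_of_lt_of_le (by omega) (h.private_card k.rotate))
      : #((G.neighborFinset r ∩ CB) ∪ (G.neighborFinset a' ∩ CB)) < #(privateNbhd G x b c a))
  have b'B := hB hb'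
  have xb' := mB.sub b' b'B
  simp only [Finset.mem_inter, Finset.mem_union, mem_neighborFinset, a'A, b'B, and_true,
    not_or] at ha'r hb'r
  have k' : Coclique3 G x r a' b' :=
    ⟨xr, xa', xb', by rintro rfl; exact rA a'A, by rintro rfl; exact rB b'B,
      by rintro rfl; exact a'B b'B, ha'r, hb'r.1, hb'r.2⟩
  have hP := h.private_clique k'
  have hP9 := h.private_card k'
  have hPsub : privateNbhd G x r a' b' ⊆ R ∪ (G.neighborFinset r ∩ CC) := by
    intro u hu
    rw [mem_privateNbhd] at hu
    obtain ⟨hur, hua, hub⟩ := hu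
    rw [mem_closedNbhd] at hur hua hub
    obtain ⟨xu, hur⟩ := hur
    simp only [xu, true_and, not_or] at hua hub
    have uA : u ∉ CA := fun hm => hua.2 (mA.clique a'A hm (Ne.symm hua.1))
    have uB : u ∉ CB := fun hm => hub.2 (mB.clique b'B hm (Ne.symm hub.1))
    simp only [Finset.mem_union, Finset.mem_inter, mem_neighborFinset, hRdef, Finset.mem_sdiff]
    by_cases uC : u ∈ CC
    · right
      rcases hur with rfl | hur
      · exact absurd uC rC
      · exact ⟨hur, uC⟩
    · left
      tauto
  have hle := Finset.card_union_le R (G.neighborFinset r ∩ CC)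
  have hle' := Finset.card_le_card hPsub
  have hPeq := Finset.eq_of_subset_of_card_le hPsub (by omega)
  obtain ⟨v, hv⟩ := Finset.card_pos.1 (by omega : 0 < #(G.neighborFinset r ∩ CC))
  have vC : v ∈ CC := (Finset.mem_inter.1 hv).2
  have hsub : R ∪ CC.erase v ⊆ G.neighborFinset x ∩ G.neighborFinset v := by
    intro u hu
    simp only [Finset.mem_inter, mem_neighborFinset]
    rcases Finset.mem_union.1 hu with hu | hu
    · refine ⟨?_, hP (by rw [hPeq]; exact_mod_cast Finset.mem_union_right _ hv)
        (by rw [hPeq]; exact_mod_cast Finset.mem_union_left _ hu) ?_⟩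
      · simpa using (Finset.mem_sdiff.1 hu).1
      · rintro rfl
        exact (Finset.mem_sdiff.1 hu).2 (Finset.mem_union_right _ vC)
    · rw [Finset.mem_erase] at hu
      exact ⟨mC.sub u hu.2, mC.clique vC hu.2 hu.1.symm⟩
  have hd : Disjoint R (CC.erase v) := by
    rw [Finset.disjoint_left]
    intro u hu hu'
    exact (Finset.mem_sdiff.1 hu).2 (Finset.mem_union_right _ (Finset.mem_of_mem_erase hu'))
  have := Finset.card_le_card hsub
  rw [Finset.card_union_of_disjoint hd, Finset.card_erase_of_mem vC,
    h.lam x v (mC.sub v vC)] at this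
  omega

/-- `L` lists three lines through `x` which partition the neighbours of `x`. -/
structure IsPencil (G : SimpleGraph V) (x : V) (L : Fin 3 → Finset V) : Prop where
  line : ∀ i, IsLine G (L i)
  mem : ∀ i, x ∈ L i
  cover : ∀ y, G.Adj x y → ∃ i, y ∈ L i
  uniq : ∀ i j y, y ≠ x → y ∈ L i → y ∈ L j → i = j

/-- The local graph is covered by three cliques, hence partitioned by three cliques attaining the
Delsarte bound. -/
lemma CoverParams.exists_pencil (h : CoverParams G) (x : V) : ∃ L, IsPencil G x L := by
  obtain ⟨a, b, c, k⟩ := h.exists_coclique3 x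
  have ext : ∀ {a b c : V}, Coclique3 G x a b c →
      ∃ C, privateNbhd G x a b c ⊆ C ∧ IsMaxLocal G x C := fun k =>
    exists_isMaxLocal (fun u hu => (mem_closedNbhd.1 (mem_privateNbhd.1 hu).1).1)
      (h.private_clique k)
  obtain ⟨CA, hA, mA⟩ := ext k
  obtain ⟨CB, hB, mB⟩ := ext k.rotate
  obtain ⟨CC, hC, mC⟩ := ext k.rotate.rotate
  have clq : ∀ {C}, IsMaxLocal G x C → G.IsClique ((insert x C : Finset V) : Set V) := by
    intro C m
    rw [Finset.coe_insert, SimpleGraph.isClique_insert]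
    exact ⟨m.clique, fun u hu _ => m.sub u hu⟩
  have hx : ∀ {C}, IsMaxLocal G x C → x ∉ C := fun m hm => G.loopless.irrefl x (m.sub x hm)
  have le13 : ∀ {C}, IsMaxLocal G x C → #C ≤ 13 := by
    intro C m
    have := h.clique_le (clq m)
    rw [Finset.card_insert_of_notMem (hx m)] at this
    omega
  have hdeg := h.deg x
  have hun1 := Finset.card_union_le (CA ∪ CB) CC
  have hun2 := Finset.card_union_le CA CB
  have hsub : G.neighborFinset x ⊆ CA ∪ CB ∪ CC := by
    rw [← Finset.sdiff_eq_empty_iff_subset, Finset.eq_empty_iff_forall_notMem]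
    intro r hr
    have e1 : CB ∪ CC ∪ CA = CA ∪ CB ∪ CC := by
      rw [Finset.union_comm, Finset.union_assoc]
    have e2 : CC ∪ CA ∪ CB = CA ∪ CB ∪ CC := by
      rw [Finset.union_assoc, Finset.union_comm]
    have cC := h.card_le_nine k hA hB hC mA mB mC hr
    have cA := h.card_le_nine k.rotate hB hC hA mB mC mA (by rw [e1]; exact hr)
    have cB := h.card_le_nine k.rotate.rotate hC hA hB mC mA mB (by rw [e2]; exact hr)
    have hR6 : #(G.neighborFinset x \ (CA ∪ CB ∪ CC)) ≤ 6 :=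
      le_trans (Finset.card_le_card (Finset.sdiff_subset_sdiff subset_rfl
        (Finset.union_subset_union (Finset.union_subset_union hA hB) hC))) (h.private_cover k)
    have := Finset.card_le_card_sdiff_add_card (s := G.neighborFinset x) (t := CA ∪ CB ∪ CC)
    omega
  have hcard := Finset.card_le_card hsub
  have lA := le13 mA
  have lB := le13 mB
  have lC := le13 mC
  have u1 := Finset.card_union_add_card_inter (CA ∪ CB) CC
  have u2 := Finset.card_union_add_card_inter CA CB
  have dAB : Disjoint CA CB := by
    rw [Finset.disjoint_iff_inter_eq_empty, ← Finset.card_eq_zero]; omega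
  have dABC : Disjoint (CA ∪ CB) CC := by
    rw [Finset.disjoint_iff_inter_eq_empty, ← Finset.card_eq_zero]; omega
  rw [Finset.disjoint_union_left] at dABC
  have ln : ∀ {C}, IsMaxLocal G x C → #C = 13 → IsLine G (insert x C) := fun m e =>
    ⟨clq m, by rw [Finset.card_insert_of_notMem (hx m), e]⟩
  refine ⟨![insert x CA, insert x CB, insert x CC], ?_, ?_, ?_, ?_⟩
  · intro i
    fin_cases i
    · exact ln mA (by omega)
    · exact ln mB (by omega)
    · exact ln mC (by omega)
  · intro i
    fin_cases i <;> simp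
  · intro y hy
    have := hsub (by simpa using hy : y ∈ G.neighborFinset x)
    simp only [Finset.mem_union] at this
    rcases this with (m | m) | m
    · exact ⟨0, by simp [m]⟩
    · exact ⟨1, by simp [m]⟩
    · exact ⟨2, by simp [m]⟩
  · have d1 := Finset.disjoint_left.1 dAB
    have d2 := Finset.disjoint_left.1 dABC.1
    have d3 := Finset.disjoint_left.1 dABC.2
    intro i j y hy hi hj
    fin_cases i <;> fin_cases j <;> simp [hy] at hi hj ⊢
    · exact d1 hi hj
    · exact d2 hi hj
    · exact d1 hj hi
    · exact d3 hi hj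
    · exact d2 hj hi
    · exact d3 hj hi

end Local

/-! ### Antipodal pairs of pencils -/

section Pencils

open Classical

variable {V : Type*} [Fintype V] {G : SimpleGraph V}

lemma fin3_two_of_zero {f : Fin 3 → ℕ} (h02 : ∀ j, f j = 0 ∨ f j = 2) (hs : ∑ j, f j = 4)
    {i j : Fin 3} (hij : i ≠ j) (hi : f i = 0) : f j = 2 := by
  rw [Fin.sum_univ_three] at hs
  have a0 := h02 0
  have a1 := h02 1
  have a2 := h02 2
  fin_cases i <;> fin_cases j <;> simp at hij hi ⊢ <;> omega

lemma fin3_zero_of_pos {f : Fin 3 → ℕ} (h02 : ∀ j, f j = 0 ∨ f j = 2) (hs : ∑ j, f j = 4)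
    {i j t : Fin 3} (hij : i ≠ j) (hit : i ≠ t) (hjt : j ≠ t) (hi : 0 < f i) (hj : 0 < f j) :
    f t = 0 := by
  rw [Fin.sum_univ_three] at hs
  have a0 := h02 0
  have a1 := h02 1
  have a2 := h02 2
  fin_cases i <;> fin_cases j <;> simp at hij hi hj <;> fin_cases t <;>
    simp at hit hjt ⊢ <;> omega

lemma IsPencil.card_eq_sum {x : V} {L : Fin 3 → Finset V} (hL : IsPencil G x L) {S : Finset V}
    (hS : S ⊆ G.neighborFinset x) : #S = ∑ i, #(S ∩ L i) := by
  have hne : ∀ y ∈ S, G.Adj x y := fun y hy => by simpa using hS hy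
  have e : S = (Finset.univ : Finset (Fin 3)).biUnion fun i => S ∩ L i := by
    ext y
    simp only [Finset.mem_biUnion, Finset.mem_univ, true_and, Finset.mem_inter]
    constructor
    · intro hy
      obtain ⟨i, hi⟩ := hL.cover y (hne y hy)
      exact ⟨i, hy, hi⟩
    · rintro ⟨i, hy, -⟩
      exact hy
  rw [← Finset.card_biUnion, ← e]
  intro i _ j _ hij
  rw [Function.onFun, Finset.disjoint_left]
  intro y hy hy'
  rw [Finset.mem_inter] at hy hy'
  exact hij (hL.uniq i j y (hne y hy.1).ne' hy.2 hy'.2)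

/-- A vertex `w` at distance 2 from `z` is on none of the lines through `z`, and its `c₂ = 4`
common neighbours with `z` are distributed over these lines as `2 + 2 + 0`. -/
lemma CoverParams.pencil_count (h : CoverParams G) {z w u : V} {M : Fin 3 → Finset V}
    (hM : IsPencil G z M) (hne : w ≠ z) (hwz : ¬ G.Adj w z) (hwu : G.Adj w u) (hzu : G.Adj z u) :
    (∀ j, w ∉ M j) ∧
    (∀ j, #(G.neighborFinset w ∩ M j) = 0 ∨ #(G.neighborFinset w ∩ M j) = 2) ∧
    ∑ j, #(G.neighborFinset w ∩ M j) = 4 := by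
  have hnot : ∀ j, w ∉ M j := fun j hm => hwz ((hM.line j).1 hm (hM.mem j) hne)
  refine ⟨hnot, fun j => h.line_zero_or_two (hM.line j) (hnot j), ?_⟩
  rw [← h.mu w z u hne hwz hwu hzu, hM.card_eq_sum Finset.inter_subset_right]
  refine Finset.sum_congr rfl fun j _ => ?_
  congr 1
  ext y
  simp only [Finset.mem_inter, mem_neighborFinset]
  constructor
  · rintro ⟨hy, hyM⟩
    have : z ≠ y := by rintro rfl; exact hwz hy
    exact ⟨⟨hy, (hM.line j).1 (hM.mem j) hyM this⟩, hyM⟩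
  · tauto

/-- Let `x` and `z` be antipodal. Adjacent neighbours `w`, `w'` of `x` on different lines through
`x` miss the same line through `z`: the line `N` through `w` and `w'` avoids `x`, hence contains two
neighbours of `z`; these lie on different lines through `z`, which thus contain neighbours of both
`w` and `w'` and are missed by neither. -/
lemma CoverParams.miss_of_miss (h : CoverParams G) {x z : V} (hxz : Antipodal G x z)
    {L M : Fin 3 → Finset V} (hL : IsPencil G x L) (hM : IsPencil G z M) {i i' : Fin 3}
    (hii : i ≠ i') {w w' : V} (hw : w ∈ L i) (hw' : w' ∈ L i') (hwx : w ≠ x) (hw'x : w' ≠ x)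
    (hww : G.Adj w w') (t : Fin 3) (hmiss : #(G.neighborFinset w ∩ M t) = 0) :
    #(G.neighborFinset w' ∩ M t) = 0 := by
  have xw : G.Adj x w := (hL.line i).1 (hL.mem i) hw hwx.symm
  have xw' : G.Adj x w' := (hL.line i').1 (hL.mem i') hw' hw'x.symm
  have nz : ∀ v, G.Adj x v → v ≠ z ∧ ¬ G.Adj v z ∧ ∃ u, G.Adj v u ∧ G.Adj z u := by
    intro v hv
    refine ⟨by rintro rfl; exact hxz.2.1 hv, fun e => hxz.2.2 v hv e.symm, ?_⟩
    obtain ⟨u, hu, hu'⟩ := h.anti_nbr z x v hxz.symm hv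
    exact ⟨u, hu', hu⟩
  obtain ⟨wz, nwz, u, wu, zu⟩ := nz w xw
  obtain ⟨w'z, nw'z, u', wu', zu'⟩ := nz w' xw'
  obtain ⟨K, hK⟩ := h.exists_pencil w
  obtain ⟨zK, zK02, zKs⟩ := h.pencil_count hK wz.symm (fun e => nwz e.symm) zu wu
  obtain ⟨-, w'M02, w'Ms⟩ := h.pencil_count hM w'z nw'z wu' zu'
  obtain ⟨i0, hi0⟩ := hK.cover x xw.symm
  obtain ⟨j0, hj0⟩ := hK.cover w' hww
  have hij : i0 ≠ j0 := by
    rintro rfl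
    have e := h.line_unique (hK.line i0) (hL.line i) hwx (hK.mem i0) hi0 hw (hL.mem i)
    rw [e] at hj0
    exact hii (hL.uniq i i' w' hw'x hj0 hw')
  have hzero : #(G.neighborFinset z ∩ K i0) = 0 := by
    rw [Finset.card_eq_zero, Finset.eq_empty_iff_forall_notMem]
    intro y hy
    simp only [Finset.mem_inter, mem_neighborFinset] at hy
    have : x ≠ y := by rintro rfl; exact hxz.2.1 hy.1.symm
    exact hxz.2.2 y ((hK.line i0).1 hi0 hy.2 this) hy.1
  have htwo : #(G.neighborFinset z ∩ K j0) = 2 :=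
    fin3_two_of_zero zK02 zKs hij hzero
  obtain ⟨y, y', hyy, hset⟩ := Finset.card_eq_two.1 htwo
  have hy : y ∈ G.neighborFinset z ∩ K j0 := by rw [hset]; simp
  have hy' : y' ∈ G.neighborFinset z ∩ K j0 := by rw [hset]; simp
  simp only [Finset.mem_inter, mem_neighborFinset] at hy hy'
  obtain ⟨j1, hj1⟩ := hM.cover y hy.1
  obtain ⟨j2, hj2⟩ := hM.cover y' hy'.1
  have hj12 : j1 ≠ j2 := by
    rintro rfl
    have e := h.line_unique (hK.line j0) (hM.line j1) hyy hy.2 hy'.2 hj1 hj2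
    exact zK j0 (by rw [e]; exact hM.mem j1)
  -- A line `M j` meeting `K j0` contains a neighbour of each point of `K j0` not adjacent to `z`.
  have hmeet : ∀ v ∈ K j0, ¬ G.Adj v z → ∀ y j, G.Adj z y → y ∈ K j0 → y ∈ M j →
      0 < #(G.neighborFinset v ∩ M j) := by
    intro v hv hvz y j hzy hyK hyM
    refine Finset.card_pos.2 ⟨y, ?_⟩
    simp only [Finset.mem_inter, mem_neighborFinset]
    exact ⟨(hK.line j0).1 hv hyK (by rintro rfl; exact hvz hzy.symm), hyM⟩
  have p1 := hmeet w (hK.mem j0) nwz y j1 hy.1 hy.2 hj1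
  have p2 := hmeet w (hK.mem j0) nwz y' j2 hy'.1 hy'.2 hj2
  have q1 := hmeet w' hj0 nw'z y j1 hy.1 hy.2 hj1
  have q2 := hmeet w' hj0 nw'z y' j2 hy'.1 hy'.2 hj2
  have n1 : j1 ≠ t := by rintro rfl; omega
  have n2 : j2 ≠ t := by rintro rfl; omega
  exact fin3_zero_of_pos w'M02 w'Ms hj12 n1 n2 q1 q2

/-- For antipodal `x`, `z` and a line `M 0` through `z`, exactly 13 neighbours of `x` have no
neighbour on `M 0`. The adjacency matching between two lines through `x` preserves this property, so
the three lines through `x` share these 13 vertices equally, which is absurd. -/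
lemma CoverParams.false (h : CoverParams G) : False := by
  obtain ⟨x⟩ : Nonempty V := Fintype.card_pos_iff.1 (by rw [h.card_V]; norm_num)
  obtain ⟨z, hz⟩ := Finset.card_pos.1 (by rw [h.card_anti x]; norm_num :
    0 < #{y | Antipodal G x y})
  have hxz : Antipodal G x z := by simpa using hz
  obtain ⟨L, hL⟩ := h.exists_pencil x
  obtain ⟨M, hM⟩ := h.exists_pencil z
  have hcount : ∀ w, G.Adj x w → #(G.neighborFinset w ∩ M 0) = 0 ∨
      #(G.neighborFinset w ∩ M 0) = 2 := by
    intro w hw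
    obtain ⟨u, hu, hu'⟩ := h.anti_nbr z x w hxz.symm hw
    exact (h.pencil_count hM (by rintro rfl; exact hxz.2.1 hw)
      (fun e => hxz.2.2 w hw e.symm) hu' hu).2.1 0
  -- The neighbours of `x` missing the line `M 0`.
  set T : Finset V := {w ∈ G.neighborFinset x | #(G.neighborFinset w ∩ M 0) = 0} with hT
  have hTsub : T ⊆ G.neighborFinset x := Finset.filter_subset _ _
  have hT13 : #T = 13 := by
    have hdc := Finset.card_mul_eq_card_mul (s := G.neighborFinset x \ T)
      (t := (M 0).erase z) (m := 2) (n := 4) G.Adj ?_ ?_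
    · rw [Finset.card_erase_of_mem (hM.mem 0), (hM.line 0).2,
        Finset.card_sdiff_of_subset hTsub, h.deg] at hdc
      omega
    · intro w hw
      simp only [hT, Finset.mem_sdiff, Finset.mem_filter, mem_neighborFinset, not_and] at hw
      refine Eq.trans ?_ ((hcount w hw.1).resolve_left (hw.2 hw.1))
      congr 1
      ext y
      simp only [Finset.mem_bipartiteAbove, Finset.mem_erase, Finset.mem_inter,
        mem_neighborFinset]
      constructor
      · tauto
      · rintro ⟨h1, h2⟩
        exact ⟨⟨by rintro rfl; exact hxz.2.2 w hw.1 h1.symm, h2⟩, h1⟩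
    · intro y hy
      rw [Finset.mem_erase] at hy
      have zy : G.Adj z y := (hM.line 0).1 (hM.mem 0) hy.2 hy.1.symm
      obtain ⟨u, hu, hu'⟩ := h.anti_nbr x z y hxz zy
      rw [← h.mu x y u (by rintro rfl; exact hxz.2.1 zy.symm)
        (fun e => hxz.2.2 y e zy) hu hu']
      congr 1
      ext w
      simp only [Finset.mem_bipartiteBelow, Finset.mem_sdiff, Finset.mem_inter,
        mem_neighborFinset, hT, Finset.mem_filter, not_and]
      constructor
      · rintro ⟨⟨h1, -⟩, h2⟩
        exact ⟨h1, h2.symm⟩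
      · rintro ⟨h1, h2⟩
        refine ⟨⟨h1, fun _ => ?_⟩, h2.symm⟩
        exact (Finset.card_pos.2 ⟨y, by simpa using ⟨h2.symm, hy.2⟩⟩).ne'
  have hstep : ∀ i i' : Fin 3, i ≠ i' → ∀ w ∈ T ∩ L i, #{w' ∈ T ∩ L i' | G.Adj w w'} = 1 := by
    intro i i' hii w hw
    simp only [hT, Finset.mem_inter, Finset.mem_filter, mem_neighborFinset] at hw
    obtain ⟨⟨xw, hmiss⟩, hwL⟩ := hw
    have hwL' : w ∉ L i' := fun hm => hii (hL.uniq i i' w xw.ne' hwL hm)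
    have h2 := h.line_two_of_adj (hL.line i') hwL' (hL.mem i') xw.symm
    have e : {w' ∈ T ∩ L i' | G.Adj w w'} = (G.neighborFinset w ∩ L i').erase x := by
      ext w'
      simp only [hT, Finset.mem_inter, Finset.mem_filter, mem_neighborFinset, Finset.mem_erase]
      constructor
      · rintro ⟨⟨⟨h1, -⟩, h2⟩, h3⟩
        exact ⟨h1.ne', h3, h2⟩
      · rintro ⟨h1, h2, h3⟩
        exact ⟨⟨⟨(hL.line i').1 (hL.mem i') h3 h1.symm,
          h.miss_of_miss hxz hL hM hii hwL h3 xw.ne' h1 h2 0 hmiss⟩, h3⟩, h2⟩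
    rw [e, Finset.card_erase_of_mem (by simpa using ⟨xw.symm, hL.mem i'⟩), h2]
  have heq : ∀ i i' : Fin 3, i ≠ i' → #(T ∩ L i) = #(T ∩ L i') := by
    intro i i' hii
    have hdc := Finset.card_mul_eq_card_mul (s := T ∩ L i) (t := T ∩ L i') (m := 1) (n := 1)
      G.Adj (fun w hw => hstep i i' hii w hw) (fun w hw => by
        rw [← hstep i' i hii.symm w hw]
        congr 1
        ext y
        simp [Finset.mem_bipartiteBelow, G.adj_comm])
    omega
  have hsum := hL.card_eq_sum hTsub
  rw [Fin.sum_univ_three, heq 1 0 (by decide), heq 2 0 (by decide)] at hsum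
  omega

end Pencils

/-- there is no DRG of diameter 3 with intersection array
`{39,24,1;1,4,39}`. -/
theorem statement19 {V : Type*} [Fintype V] (G : SimpleGraph V) (b c : ℕ → ℕ)
    (hdrg : IsDRG G 3 b c) : ¬ arr3 b c 39 24 1 1 4 39 := by
  exact fun h => (coverParams_of_isDRG hdrg h).false
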